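/- arXiv:math/0509368 — 2 statements merged into one kernel-verified Lean document; each statement's English description precedes it below -/
import Mathlib

section
/- For every μ, ν ∈ ℂ, the bracket defined on the vector space (R⊗ġ) ⊕ K ⊕ D by the given formulas is well defined (compatible with the relations defining K), is alternating, and satisfies the Jacobi identity; hence the full toroidal Lie algebra g(μ,ν) is a Lie algebra over ℂ. -/
/-!
STATEMENT 0: For every μ, ν ∈ ℂ, the bracket defined on the vector space
(R⊗ġ) ⊕ K ⊕ D by the given formulas is well defined, alternating and satisfies
the Jacobi identity; hence the full toroidal Lie algebra g(μ,ν) is a Lie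
algebra over ℂ.

We formalize this as: there exists a Lie algebra structure (a type `G` with
`LieRing`/`LieAlgebra ℂ` instances) on the vector space
(R⊗ġ) ⊕ (Ω¹_R/d(R)) ⊕ D (pinned down by a linear equivalence `e` to the
concrete model), in which the brackets of the distinguished generators
t^r⊗x, t^r k_p, t^r d_p are given exactly by the formulas of the paper.
-/

namespace ToroidalPaper

/-- multi-indices r ∈ ℤ^{N+1} -/
abbrev Idx (N : ℕ) := Fin (N + 1) → ℤ

/-- The model for the 1-forms Ω¹_R: the free module on k₀,…,k_N over R,
written in the monomial basis t^r k_p. -/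
abbrev OmegaR (N : ℕ) := Idx N →₀ (Fin (N + 1) → ℂ)

/-- The subspace d(R) ⊆ Ω¹_R of exact forms: d(t^r) = Σ_p r_p t^r k_p. -/
noncomputable def dR (N : ℕ) : Submodule ℂ (OmegaR N) :=
  Submodule.span ℂ {w : OmegaR N | ∃ r : Idx N, w = Finsupp.single r fun p => (r p : ℂ)}

/-- K = Ω¹_R / d(R) -/
abbrev Kmod (N : ℕ) := OmegaR N ⧸ dR N

variable (N : ℕ) (g : Type) [LieRing g] [LieAlgebra ℂ g]

/-- The underlying vector space of the full toroidal Lie algebra: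
(R ⊗ ġ) ⊕ K ⊕ D, where R ⊗ ġ is modeled as `Idx N →₀ g` (coefficient of t^r)
and D as `Idx N →₀ (Fin (N+1) → ℂ)` (coefficients of t^r d_p). -/
abbrev Carrier := (Idx N →₀ g) × Kmod N × (Idx N →₀ (Fin (N + 1) → ℂ))

/-- A realization of the vector space (R⊗ġ) ⊕ K ⊕ D as a Lie algebra:
a Lie algebra `G` together with a linear identification with the model. -/
structure Tor where
  G : Type
  [instLieRing : LieRing G]
  [instLieAlgebra : LieAlgebra ℂ G]
  e : G ≃ₗ[ℂ] Carrier N g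

attribute [instance] Tor.instLieRing Tor.instLieAlgebra

namespace Tor

variable {N g}
variable (T : Tor N g)

/-- the element t^r ⊗ x of R ⊗ ġ -/
noncomputable def tg (r : Idx N) (x : g) : T.G := T.e.symm (Finsupp.single r x, 0, 0)

/-- the element t^r k_p of K -/
noncomputable def k (r : Idx N) (p : Fin (N + 1)) : T.G :=
  T.e.symm (0, Submodule.Quotient.mk (p := dR N) (Finsupp.single r (Pi.single p 1)), 0)

/-- the element t^r d_p of D -/
noncomputable def d (r : Idx N) (p : Fin (N + 1)) : T.G :=
  T.e.symm (0, 0, Finsupp.single r (Pi.single p 1))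

/-- t^m · d(t^r) = Σ_p r_p t^{r+m} k_p -/
noncomputable def kSum (r m : Idx N) : T.G := ∑ p : Fin (N + 1), (r p : ℂ) • T.k (r + m) p

/-- The bracket relations of the full toroidal Lie algebra g(μ,ν). -/
structure IsToroidal (B : g →ₗ[ℂ] g →ₗ[ℂ] ℂ) (μ ν : ℂ) : Prop where
  br_gg : ∀ (r m : Idx N) (x y : g),
    ⁅T.tg r x, T.tg m y⁆ = T.tg (r + m) ⁅x, y⁆ + B x y • T.kSum r m
  br_kg : ∀ (r m : Idx N) (p : Fin (N + 1)) (x : g), ⁅T.k r p, T.tg m x⁆ = 0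
  br_kk : ∀ (r m : Idx N) (p q : Fin (N + 1)), ⁅T.k r p, T.k m q⁆ = 0
  br_dg : ∀ (r m : Idx N) (a : Fin (N + 1)) (x : g),
    ⁅T.d r a, T.tg m x⁆ = (m a : ℂ) • T.tg (r + m) x
  br_dk : ∀ (r m : Idx N) (a b : Fin (N + 1)),
    ⁅T.d r a, T.k m b⁆ = (m a : ℂ) • T.k (r + m) b
      + (if a = b then (1 : ℂ) else 0) • T.kSum r m
  br_dd : ∀ (r m : Idx N) (a b : Fin (N + 1)),
    ⁅T.d r a, T.d m b⁆ = (m a : ℂ) • T.d (r + m) b - (r b : ℂ) • T.d (r + m) a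
      + (μ * (m a : ℂ) * (r b : ℂ) + ν * (r a : ℂ) * (m b : ℂ)) •
          (∑ p : Fin (N + 1), (m p : ℂ) • T.k (r + m) p)

end Tor

/-!
The quotient of `g(μ,ν)` by `K` is the semidirect sum of the multiloop algebra `R ⊗ 𝔤` and the Lie
algebra `D` of vector fields on the torus, and `g(μ,ν)` is the extension of this semidirect sum by
the module `K` that is defined by a 2-cocycle. The Lie derivative along a vector field maps `d(t^m)`
to a multiple of `d(t^(r+m))`, so it preserves the exact forms and `K` is a `D`-module: this is the
compatibility of the bracket with the relations of `K`. The cocycle is the sum of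
`B(x, y) t^m d(t^r)` on `R ⊗ 𝔤`, which is `D`-equivariant, and of a combination of two cocycles of
`D`. All maps are bilinear, so their identities may be checked on monomials, where they become
identities of polynomials in the exponents and the coefficient vectors, modulo the relation
`∑ r_p t^r k_p = 0` of `K`.
-/

/-- The action of a Lie algebra on a module, as a bilinear map. -/
def lieBilin (k L M : Type*) [CommRing k] [LieRing L] [LieAlgebra k L] [AddCommGroup M] [Module k M]
    [LieRingModule L M] [LieModule k L M] : L →ₗ[k] M →ₗ[k] M :=
  (LieModule.toEnd k L M : L →ₗ[k] Module.End k M)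

theorem lieBilin_apply (k : Type*) {L M : Type*} [CommRing k] [LieRing L] [LieAlgebra k L]
    [AddCommGroup M] [Module k M] [LieRingModule L M] [LieModule k L M] (x : L) (m : M) :
    lieBilin k L M x m = ⁅x, m⁆ :=
  rfl

section MonomialExtension

variable {k ι A B C P Q S U : Type*} [CommSemiring k]
  [AddCommMonoid A] [Module k A] [AddCommMonoid B] [Module k B] [AddCommMonoid C] [Module k C]
  [AddCommMonoid P] [Module k P] [AddCommMonoid Q] [Module k Q] [AddCommMonoid S] [Module k S]

/-- The bilinear map on finitely supported functions with prescribed values `f r m v w` on pairs of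
monomials `single r v`, `single m w`. -/
noncomputable def bilinearOfMonomials [AddCommMonoid U] [Module k U]
    (f : ι → ι → A →ₗ[k] B →ₗ[k] U) : (ι →₀ A) →ₗ[k] (ι →₀ B) →ₗ[k] U :=
  Finsupp.lsum k fun r ↦ (Finsupp.lsum k fun m ↦ (f r m).flip).flip

@[simp]
theorem bilinearOfMonomials_single [AddCommMonoid U] [Module k U]
    (f : ι → ι → A →ₗ[k] B →ₗ[k] U) (r m : ι) (v : A) (w : B) :
    bilinearOfMonomials f (.single r v) (.single m w) = f r m v w := by
  simp [bilinearOfMonomials]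

theorem apply_self_eq_zero_of_monomials [AddCommGroup U] [IsAddTorsionFree U] [Module k U]
    (β : (ι →₀ A) →ₗ[k] (ι →₀ A) →ₗ[k] U)
    (h : ∀ r m v w, β (.single r v) (.single m w) = -β (.single m w) (.single r v))
    (x : ι →₀ A) : β x x = 0 := by
  have skew : β = -β.flip := by
    ext r v m w
    simpa using h r m v w
  exact self_eq_neg.mp (LinearMap.congr_fun₂ skew x x)

theorem leibniz_of_monomials [AddCommMonoid U] [Module k U]
    {a : (ι →₀ A) →ₗ[k] Q →ₗ[k] U} {b : (ι →₀ B) →ₗ[k] (ι →₀ C) →ₗ[k] Q}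
    {c : P →ₗ[k] (ι →₀ C) →ₗ[k] U} {d : (ι →₀ A) →ₗ[k] (ι →₀ B) →ₗ[k] P}
    {e : (ι →₀ B) →ₗ[k] S →ₗ[k] U} {f : (ι →₀ A) →ₗ[k] (ι →₀ C) →ₗ[k] S}
    (h : ∀ r m s u v w, a (.single r u) (b (.single m v) (.single s w)) =
      c (d (.single r u) (.single m v)) (.single s w) +
        e (.single m v) (f (.single r u) (.single s w)))
    (x : ι →₀ A) (y : ι →₀ B) (z : ι →₀ C) : a x (b y z) = c (d x y) z + e y (f x z) := by
  induction x using Finsupp.induction_linear with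
  | zero => simp
  | add x x' hx hx' =>
    simp only [map_add, LinearMap.add_apply, hx, hx']
    abel
  | single r u =>
    have heq : b.compr₂ (a (.single r u)) =
        c ∘ₗ d (.single r u) + e.compl₂ (f (.single r u)) := by
      ext m v s w
      simpa using h r m s u v w
    exact LinearMap.congr_fun₂ heq y z

end MonomialExtension

section SemidirectCocycle

open LieAlgebra LieModule.Cohomology

variable {k L D M : Type*} [CommRing k] [LieRing L] [LieAlgebra k L] [LieRing D] [LieAlgebra k D]
  {ψ : D →ₗ⁅k⁆ LieDerivation k L L} [AddCommGroup M] [Module k M]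

/-- The 2-cochain on the semidirect sum of `L` and `D` that applies `β` to the components in `L`
and `γ` to the components in `D`. -/
def semidirectCochain (β : twoCochain k L M) (γ : twoCochain k D M) :
    twoCochain k (L ⋊⁅ψ⁆ D) M where
  val := β.val.compl₁₂ (SemiDirectSum.projl ψ) (SemiDirectSum.projl ψ) +
    γ.val.compl₁₂ (SemiDirectSum.projr ψ : _ →ₗ[k] D) (SemiDirectSum.projr ψ : _ →ₗ[k] D)
  property := fun X ↦ by simp

@[simp]
theorem semidirectCochain_apply (β : twoCochain k L M) (γ : twoCochain k D M)
    (X Y : L ⋊⁅ψ⁆ D) :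
    semidirectCochain β γ X Y = β X.left Y.left + γ X.right Y.right :=
  rfl

variable [LieRingModule D M] [LieModule k D M]
  [LieRingModule (L ⋊⁅ψ⁆ D) M] [LieModule k (L ⋊⁅ψ⁆ D) M]

theorem semidirectCochain_mem_twoCocycle (hM : ∀ (X : L ⋊⁅ψ⁆ D) (m : M), ⁅X, m⁆ = ⁅X.right, m⁆)
    {β : twoCochain k L M} (β_leibniz : ∀ x y z, β x ⁅y, z⁆ = β ⁅x, y⁆ z + β y ⁅x, z⁆)
    (β_invariant : ∀ (δ : D) x y, ⁅δ, β x y⁆ = β (ψ δ x) y + β x (ψ δ y))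
    {γ : twoCochain k D M} (hγ : γ ∈ twoCocycle k D M) :
    semidirectCochain β γ ∈ twoCocycle k (L ⋊⁅ψ⁆ D) M := by
  rw [mem_twoCocycle_iff] at hγ ⊢
  ext ⟨x, δ₁⟩ ⟨y, δ₂⟩ ⟨z, δ₃⟩
  have hγ' := congr($hγ δ₁ δ₂ δ₃)
  simp only [d₂₃_apply, LinearMap.zero_apply] at hγ' ⊢
  simp only [hM, SemiDirectSum.lie_eq_mk, semidirectCochain_apply, lie_add, map_add, map_sub,
    LinearMap.add_apply, LinearMap.sub_apply, β_invariant]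
  have swap := fun u v ↦ (twoCochain_skew β u v).symm
  rw [swap x ⁅y, z⁆, β_leibniz, swap y ⁅x, z⁆, swap y (ψ δ₁ z), swap x (ψ δ₂ z), swap x (ψ δ₃ y)]
  linear_combination (norm := abel) hγ'

end SemidirectCocycle

section WittAlgebra

variable {N : ℕ}

/-- The exponent `r` as a complex vector: the derivation `t^m ∑ u_p d_p` maps `t^r` to
`(r.vec ⬝ᵥ u) t^(r+m)`, and `d(t^r)` is the monomial form with coefficient vector `r.vec`. -/
def Idx.vec (r : Idx N) : Fin (N + 1) → ℂ := fun p ↦ r p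

theorem Idx.vec_add (r m : Idx N) : (r + m).vec = r.vec + m.vec := by
  ext p
  simp [vec]

/-- The differentiation of the coefficient `v` of a monomial of exponent `m` in the direction `u`:
`(u, v) ↦ (m.vec ⬝ᵥ u) • v`. -/
noncomputable def directionalDeriv (V : Type*) [AddCommGroup V] [Module ℂ V] (m : Idx N) :
    (Fin (N + 1) → ℂ) →ₗ[ℂ] V →ₗ[ℂ] V :=
  LinearMap.lsmul ℂ V ∘ₗ dotProductBilin ℂ ℂ m.vec

/-- The Lie bracket of vector fields on the torus,
`[t^r d_u, t^m d_v] = t^(r+m) ((m.vec ⬝ᵥ u) d_v - (r.vec ⬝ᵥ v) d_u)` for `d_u = ∑ u_p d_p`. -/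
noncomputable def wittBracket : (Idx N →₀ (Fin (N + 1) → ℂ)) →ₗ[ℂ]
    (Idx N →₀ (Fin (N + 1) → ℂ)) →ₗ[ℂ] (Idx N →₀ (Fin (N + 1) → ℂ)) :=
  bilinearOfMonomials fun r m ↦
    (directionalDeriv _ m - (directionalDeriv _ r).flip).compr₂ (Finsupp.lsingle (r + m))

theorem wittBracket_single (r m : Idx N) (u v : Fin (N + 1) → ℂ) :
    wittBracket (.single r u) (.single m v) =
      .single (r + m) ((m.vec ⬝ᵥ u) • v - (r.vec ⬝ᵥ v) • u) := by
  simp [wittBracket, directionalDeriv]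

theorem wittBracket_self (X : Idx N →₀ (Fin (N + 1) → ℂ)) : wittBracket X X = 0 := by
  have : IsAddTorsionFree (Idx N →₀ (Fin (N + 1) → ℂ)) := .of_isTorsionFree ℂ _
  refine apply_self_eq_zero_of_monomials _ (fun r m u v ↦ ?_) X
  rw [wittBracket_single, wittBracket_single, add_comm m r, ← Finsupp.single_neg, neg_sub]

theorem wittBracket_leibniz (X Y Z : Idx N →₀ (Fin (N + 1) → ℂ)) :
    wittBracket X (wittBracket Y Z) =
      wittBracket (wittBracket X Y) Z + wittBracket Y (wittBracket X Z) := by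
  refine leibniz_of_monomials (fun r m s u v w ↦ ?_) X Y Z
  simp only [wittBracket_single, add_assoc r m s, add_left_comm m r s, ← Finsupp.single_add,
    Idx.vec_add, add_dotProduct, dotProduct_sub, dotProduct_smul, smul_eq_mul]
  congr 1
  module

/-- The Lie algebra of polynomial vector fields on the torus (the space `D` of the paper); the
coefficient of `t^r` is the vector `u` standing for `∑ u_p d_p`. -/
def WittAlgebra (N : ℕ) := Idx N →₀ (Fin (N + 1) → ℂ)

namespace WittAlgebra

noncomputable instance : AddCommGroup (WittAlgebra N) :=
  inferInstanceAs (AddCommGroup (Idx N →₀ (Fin (N + 1) → ℂ)))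

noncomputable instance : Module ℂ (WittAlgebra N) :=
  inferInstanceAs (Module ℂ (Idx N →₀ (Fin (N + 1) → ℂ)))

noncomputable instance : LieRing (WittAlgebra N) where
  bracket X Y := wittBracket X Y
  add_lie := wittBracket.map_add₂
  lie_add X := (wittBracket X).map_add
  lie_self := wittBracket_self
  leibniz_lie := wittBracket_leibniz

noncomputable instance : LieAlgebra ℂ (WittAlgebra N) where
  lie_smul c X := (wittBracket X).map_smul c

/-- The vector field `t^r ∑ u_p d_p`, as a linear function of `u`. -/
noncomputable def monomial (r : Idx N) : (Fin (N + 1) → ℂ) →ₗ[ℂ] WittAlgebra N :=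
  Finsupp.lsingle r

theorem lie_monomial (r m : Idx N) (u v : Fin (N + 1) → ℂ) :
    ⁅monomial r u, monomial m v⁆ =
      monomial (r + m) ((m.vec ⬝ᵥ u) • v - (r.vec ⬝ᵥ v) • u) :=
  wittBracket_single r m u v

theorem hom_ext {V : Type*} [AddCommGroup V] [Module ℂ V] {φ χ : WittAlgebra N →ₗ[ℂ] V}
    (h : ∀ r u, φ (monomial r u) = χ (monomial r u)) : φ = χ :=
  Finsupp.lhom_ext h

end WittAlgebra

end WittAlgebra

section Forms

variable {N : ℕ}

/-- The Lie derivative of differential forms along vector fields on the torus. -/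
noncomputable def lieDeriv : (Idx N →₀ (Fin (N + 1) → ℂ)) →ₗ[ℂ] OmegaR N →ₗ[ℂ] OmegaR N :=
  bilinearOfMonomials fun r m ↦
    (directionalDeriv _ m +
      (dotProductBilin ℂ ℂ).compr₂ (LinearMap.toSpanSingleton ℂ _ r.vec)).compr₂
        (Finsupp.lsingle (r + m))

theorem lieDeriv_single (r m : Idx N) (u w : Fin (N + 1) → ℂ) :
    lieDeriv (.single r u) (.single m w) =
      .single (r + m) ((m.vec ⬝ᵥ u) • w + (u ⬝ᵥ w) • r.vec) := by
  simp [lieDeriv, directionalDeriv]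

theorem lieDeriv_leibniz (X Y : Idx N →₀ (Fin (N + 1) → ℂ)) (ω : OmegaR N) :
    lieDeriv X (lieDeriv Y ω) = lieDeriv (wittBracket X Y) ω + lieDeriv Y (lieDeriv X ω) := by
  refine leibniz_of_monomials (fun r m s u v w ↦ ?_) X Y ω
  simp only [lieDeriv_single, wittBracket_single, add_assoc r m s, add_left_comm m r s,
    ← Finsupp.single_add, Idx.vec_add, add_dotProduct, dotProduct_add, sub_dotProduct,
    dotProduct_sub, dotProduct_smul, smul_dotProduct, smul_eq_mul, dotProduct_comm u m.vec,
    dotProduct_comm v r.vec]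
  congr 1
  module

noncomputable instance : LieRingModule (WittAlgebra N) (OmegaR N) where
  bracket X ω := lieDeriv X ω
  add_lie := lieDeriv.map_add₂
  lie_add X := (lieDeriv X).map_add
  leibniz_lie := lieDeriv_leibniz

noncomputable instance : LieModule ℂ (WittAlgebra N) (OmegaR N) where
  smul_lie := lieDeriv.map_smul₂
  lie_smul c X := (lieDeriv X).map_smul c

theorem lieDeriv_mem_dR (X : Idx N →₀ (Fin (N + 1) → ℂ)) {ω : OmegaR N} (hω : ω ∈ dR N) :
    lieDeriv X ω ∈ dR N := by
  induction hω using Submodule.span_induction with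
  | zero => simp
  | add ω ω' _ _ h h' => simpa only [map_add] using add_mem h h'
  | smul c ω _ h => simpa only [map_smul] using (dR N).smul_mem c h
  | mem ω hω =>
    obtain ⟨m, rfl⟩ := hω
    induction X using Finsupp.induction_linear with
    | zero => simp
    | add X X' h h' => simpa only [map_add, LinearMap.add_apply] using add_mem h h'
    | single r u =>
      have exact_single : lieDeriv (.single r u) (.single m m.vec) =
          (m.vec ⬝ᵥ u) • (.single (r + m) (r + m).vec : OmegaR N) := by
        rw [lieDeriv_single, Finsupp.smul_single, Idx.vec_add, smul_add,
          add_comm (_ • r.vec), dotProduct_comm u]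
      change lieDeriv (.single r u) (.single m m.vec) ∈ dR N
      rw [exact_single]
      exact (dR N).smul_mem _ (Submodule.subset_span ⟨r + m, rfl⟩)

/-- The exact forms, as a submodule of the module of forms over the Lie algebra of vector fields. -/
noncomputable def exactForms (N : ℕ) : LieSubmodule ℂ (WittAlgebra N) (OmegaR N) where
  toSubmodule := dR N
  lie_mem := fun {X} _ hω ↦ lieDeriv_mem_dR X hω

noncomputable instance : LieRingModule (WittAlgebra N) (Kmod N) :=
  inferInstanceAs (LieRingModule (WittAlgebra N) (OmegaR N ⧸ exactForms N))

noncomputable instance : LieModule ℂ (WittAlgebra N) (Kmod N) :=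
  inferInstanceAs (LieModule ℂ (WittAlgebra N) (OmegaR N ⧸ exactForms N))

/-- The class in `K` of the monomial form `t^r ∑ w_p k_p`, as a linear function of `w`. -/
noncomputable def kMonomial (r : Idx N) : (Fin (N + 1) → ℂ) →ₗ[ℂ] Kmod N :=
  (dR N).mkQ ∘ₗ Finsupp.lsingle r

theorem kMonomial_vec (r : Idx N) : kMonomial r r.vec = 0 :=
  (Submodule.Quotient.mk_eq_zero _).mpr (Submodule.subset_span ⟨r, rfl⟩)

theorem kMonomial_add_vec_right (r m : Idx N) :
    kMonomial (r + m) m.vec = -kMonomial (r + m) r.vec := by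
  rw [← add_eq_zero_iff_eq_neg', ← map_add, ← Idx.vec_add, kMonomial_vec]

theorem lie_kMonomial (r m : Idx N) (u w : Fin (N + 1) → ℂ) :
    ⁅WittAlgebra.monomial r u, kMonomial m w⁆ =
      (m.vec ⬝ᵥ u) • kMonomial (r + m) w + (u ⬝ᵥ w) • kMonomial (r + m) r.vec := by
  rw [← map_smul, ← map_smul, ← map_add]
  exact congr_arg (dR N).mkQ (lieDeriv_single r m u w)

end Forms

section Multiloop

open LieAlgebra

variable {N : ℕ} {𝔤 : Type*} [LieRing 𝔤] [LieAlgebra ℂ 𝔤]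

/-- The multiloop algebra `R ⊗ 𝔤`, as the space of Laurent polynomials with coefficients in `𝔤`. -/
abbrev Multiloop (N : ℕ) (𝔤 : Type*) [Zero 𝔤] := Idx N →₀ 𝔤

noncomputable instance : LieRing (Multiloop N 𝔤) :=
  (LoopAlgebra.toFinsupp ℂ (Idx N) 𝔤).symm.toAddEquiv.lieRing

noncomputable instance : LieAlgebra ℂ (Multiloop N 𝔤) :=
  (LoopAlgebra.toFinsupp ℂ (Idx N) 𝔤).symm.lieAlgebra

theorem Multiloop.lie_single (r m : Idx N) (x y : 𝔤) :
    ⁅(.single r x : Multiloop N 𝔤), (.single m y : Multiloop N 𝔤)⁆ = .single (r + m) ⁅x, y⁆ := by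
  rw [AddEquiv.bracket_def]
  simp

/-- The action of the vector fields on the multiloop algebra by differentiation of the
coefficients. -/
noncomputable def multiloopDeriv (𝔤 : Type*) [LieRing 𝔤] [LieAlgebra ℂ 𝔤] :
    (Idx N →₀ (Fin (N + 1) → ℂ)) →ₗ[ℂ] Multiloop N 𝔤 →ₗ[ℂ] Multiloop N 𝔤 :=
  bilinearOfMonomials fun r m ↦ (directionalDeriv 𝔤 m).compr₂ (Finsupp.lsingle (r + m))

theorem multiloopDeriv_single (r m : Idx N) (u : Fin (N + 1) → ℂ) (x : 𝔤) :
    multiloopDeriv 𝔤 (.single r u) (.single m x) = .single (r + m) ((m.vec ⬝ᵥ u) • x) := by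
  simp [multiloopDeriv, directionalDeriv]

theorem multiloopDeriv_wittBracket (X Y : Idx N →₀ (Fin (N + 1) → ℂ)) (f : Multiloop N 𝔤) :
    multiloopDeriv 𝔤 X (multiloopDeriv 𝔤 Y f) =
      multiloopDeriv 𝔤 (wittBracket X Y) f + multiloopDeriv 𝔤 Y (multiloopDeriv 𝔤 X f) := by
  refine leibniz_of_monomials (fun r m s u v x ↦ ?_) X Y f
  simp only [multiloopDeriv_single, wittBracket_single, add_assoc r m s, add_left_comm m r s,
    ← Finsupp.single_add, Idx.vec_add, add_dotProduct, dotProduct_sub, dotProduct_smul,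
    smul_eq_mul]
  congr 1
  module

theorem multiloopDeriv_lie (X : Idx N →₀ (Fin (N + 1) → ℂ)) (f h : Multiloop N 𝔤) :
    multiloopDeriv 𝔤 X ⁅f, h⁆ = ⁅multiloopDeriv 𝔤 X f, h⁆ + ⁅f, multiloopDeriv 𝔤 X h⁆ := by
  let ad := lieBilin ℂ (Multiloop N 𝔤) (Multiloop N 𝔤)
  refine leibniz_of_monomials (b := ad) (c := ad) (e := ad) (fun r m s u x y ↦ ?_) X f h
  simp only [ad, lieBilin_apply, Multiloop.lie_single, multiloopDeriv_single, add_assoc r m s,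
    add_left_comm m r s, ← Finsupp.single_add, Idx.vec_add, add_dotProduct, smul_lie, lie_smul,
    add_smul]

/-- The Lie algebra of vector fields acting on the multiloop algebra by derivations. -/
noncomputable def multiloopDerivation (N : ℕ) (𝔤 : Type*) [LieRing 𝔤] [LieAlgebra ℂ 𝔤] :
    WittAlgebra N →ₗ⁅ℂ⁆ LieDerivation ℂ (Multiloop N 𝔤) (Multiloop N 𝔤) where
  toFun X :=
    { toLinearMap := multiloopDeriv 𝔤 X
      leibniz' := fun f h ↦ by
        exact (multiloopDeriv_lie X f h).trans (by rw [← lie_skew h, sub_neg_eq_add, add_comm]) }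
  map_add' X Y := LieDerivation.ext fun f ↦ (multiloopDeriv 𝔤).map_add₂ X Y f
  map_smul' c X := LieDerivation.ext fun f ↦ (multiloopDeriv 𝔤).map_smul₂ c X f
  map_lie' {X Y} := LieDerivation.ext fun f ↦
    eq_sub_of_add_eq (multiloopDeriv_wittBracket X Y f).symm

theorem multiloopDerivation_monomial_single (r m : Idx N) (u : Fin (N + 1) → ℂ) (x : 𝔤) :
    multiloopDerivation N 𝔤 (.monomial r u) (.single m x) = .single (r + m) ((m.vec ⬝ᵥ u) • x) :=
  multiloopDeriv_single r m u x

end Multiloop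

section Cocycles

open LieModule.Cohomology

variable {N : ℕ} {𝔤 : Type*} [LieRing 𝔤] [LieAlgebra ℂ 𝔤]

/-- The bilinear map `(t^r x, t^m y) ↦ B(x, y) t^m d(t^r)` with values in `K`. -/
noncomputable def loopPairing (B : 𝔤 →ₗ[ℂ] 𝔤 →ₗ[ℂ] ℂ) :
    Multiloop N 𝔤 →ₗ[ℂ] Multiloop N 𝔤 →ₗ[ℂ] Kmod N :=
  bilinearOfMonomials fun r m ↦ B.compr₂ (.toSpanSingleton ℂ _ (kMonomial (r + m) r.vec))

theorem loopPairing_single (B : 𝔤 →ₗ[ℂ] 𝔤 →ₗ[ℂ] ℂ) (r m : Idx N) (x y : 𝔤) :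
    loopPairing B (.single r x) (.single m y) = B x y • kMonomial (r + m) r.vec := by
  simp [loopPairing]

theorem loopPairing_self {B : 𝔤 →ₗ[ℂ] 𝔤 →ₗ[ℂ] ℂ} (hB : ∀ x y, B x y = B y x)
    (f : Multiloop N 𝔤) : loopPairing B f f = 0 := by
  have : IsAddTorsionFree (Kmod N) := .of_isTorsionFree ℂ _
  refine apply_self_eq_zero_of_monomials _ (fun r m x y ↦ ?_) f
  rw [loopPairing_single, loopPairing_single, hB, add_comm m r, kMonomial_add_vec_right, smul_neg,
    neg_neg]

theorem loopPairing_lie {B : 𝔤 →ₗ[ℂ] 𝔤 →ₗ[ℂ] ℂ} (hB : ∀ x y z, B ⁅x, y⁆ z = B x ⁅y, z⁆)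
    (f h l : Multiloop N 𝔤) :
    loopPairing B f ⁅h, l⁆ = loopPairing B ⁅f, h⁆ l + loopPairing B h ⁅f, l⁆ := by
  let ad := lieBilin ℂ (Multiloop N 𝔤) (Multiloop N 𝔤)
  refine leibniz_of_monomials (b := ad) (d := ad) (f := ad) (fun r m s x y z ↦ ?_) f h l
  have swap : B y ⁅x, z⁆ = -B x ⁅y, z⁆ := by
    rw [← hB, ← hB, ← lie_skew, map_neg, LinearMap.neg_apply]
  simp only [ad, lieBilin_apply, Multiloop.lie_single, loopPairing_single, add_assoc r m s,
    add_left_comm m r s, Idx.vec_add, map_add, hB, swap]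
  module

theorem lie_loopPairing (B : 𝔤 →ₗ[ℂ] 𝔤 →ₗ[ℂ] ℂ) (X : WittAlgebra N) (f h : Multiloop N 𝔤) :
    ⁅X, loopPairing B f h⁆ = loopPairing B (multiloopDerivation N 𝔤 X f) h +
      loopPairing B f (multiloopDerivation N 𝔤 X h) := by
  refine leibniz_of_monomials (A := Fin (N + 1) → ℂ) (a := lieBilin ℂ (WittAlgebra N) (Kmod N))
    (d := multiloopDeriv 𝔤) (f := multiloopDeriv 𝔤) (fun r m s u x y ↦ ?_) X f h
  simp only [loopPairing_single, multiloopDeriv_single]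
  change ⁅WittAlgebra.monomial r u, B x y • kMonomial (m + s) m.vec⁆ = _
  rw [lie_smul, lie_kMonomial]
  simp only [add_assoc r m s, add_left_comm m r s, Idx.vec_add, add_dotProduct, map_add, map_smul,
    LinearMap.smul_apply, smul_eq_mul, dotProduct_comm u]
  module

/-- The 2-cochain `loopPairing B` of the multiloop algebra with values in `K`. -/
noncomputable def loopCochain (N : ℕ) {B : 𝔤 →ₗ[ℂ] 𝔤 →ₗ[ℂ] ℂ} (hB : ∀ x y, B x y = B y x) :
    twoCochain ℂ (Multiloop N 𝔤) (Kmod N) :=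
  ⟨loopPairing B, loopPairing_self hB⟩

/-- The bilinear map `μ τ₁ + ν τ₂`, for the two basic `K`-valued cocycles of the Witt algebra:
`τ₁(t^r d_u, t^m d_v) = m(u) r(v) t^r d(t^m)` and `τ₂(t^r d_u, t^m d_v) = r(u) m(v) t^r d(t^m)`,
where `r(u) = r.vec ⬝ᵥ u`. -/
noncomputable def wittPairing (μ ν : ℂ) :
    (Idx N →₀ (Fin (N + 1) → ℂ)) →ₗ[ℂ] (Idx N →₀ (Fin (N + 1) → ℂ)) →ₗ[ℂ] Kmod N :=
  bilinearOfMonomials fun r m ↦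
    let φ : Idx N → (Fin (N + 1) → ℂ) →ₗ[ℂ] ℂ := fun s ↦ dotProductBilin ℂ ℂ s.vec
    (μ • (LinearMap.mul ℂ ℂ).compl₁₂ (φ m) (φ r) +
      ν • (LinearMap.mul ℂ ℂ).compl₁₂ (φ r) (φ m)).compr₂
        (.toSpanSingleton ℂ _ (kMonomial (r + m) m.vec))

theorem wittPairing_single (μ ν : ℂ) (r m : Idx N) (u v : Fin (N + 1) → ℂ) :
    wittPairing μ ν (.single r u) (.single m v) =
      (μ * (m.vec ⬝ᵥ u) * (r.vec ⬝ᵥ v) + ν * (r.vec ⬝ᵥ u) * (m.vec ⬝ᵥ v)) •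
        kMonomial (r + m) m.vec := by
  simp [wittPairing, mul_assoc]

theorem wittPairing_self (μ ν : ℂ) (X : Idx N →₀ (Fin (N + 1) → ℂ)) :
    wittPairing μ ν X X = 0 := by
  have : IsAddTorsionFree (Kmod N) := .of_isTorsionFree ℂ _
  refine apply_self_eq_zero_of_monomials _ (fun r m u v ↦ ?_) X
  rw [wittPairing_single, wittPairing_single, add_comm m r, kMonomial_add_vec_right]
  module

/-- The 2-cochain `wittPairing μ ν` of the Witt algebra with values in `K`. -/
noncomputable def wittCochain (N : ℕ) (μ ν : ℂ) : twoCochain ℂ (WittAlgebra N) (Kmod N) :=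
  ⟨wittPairing μ ν, wittPairing_self μ ν⟩

theorem wittCochain_monomial (μ ν : ℂ) (r m : Idx N) (u v : Fin (N + 1) → ℂ) :
    wittCochain N μ ν (.monomial r u) (.monomial m v) =
      (μ * (m.vec ⬝ᵥ u) * (r.vec ⬝ᵥ v) + ν * (r.vec ⬝ᵥ u) * (m.vec ⬝ᵥ v)) •
        kMonomial (r + m) m.vec :=
  wittPairing_single μ ν r m u v

theorem wittCochain_mem_twoCocycle (μ ν : ℂ) :
    wittCochain N μ ν ∈ twoCocycle ℂ (WittAlgebra N) (Kmod N) := by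
  rw [mem_twoCocycle_iff]
  refine WittAlgebra.hom_ext fun r u ↦ WittAlgebra.hom_ext fun m v ↦
    WittAlgebra.hom_ext fun s w ↦ ?_
  have kMonomial_vec_s : kMonomial (r + (m + s)) s.vec =
      -kMonomial (r + (m + s)) r.vec - kMonomial (r + (m + s)) m.vec := by
    have := kMonomial_vec (r + (m + s))
    rw [Idx.vec_add, Idx.vec_add, map_add, map_add] at this
    linear_combination (norm := module) this
  simp only [d₂₃_apply, LinearMap.zero_apply, WittAlgebra.lie_monomial, wittCochain_monomial,
    lie_smul, lie_kMonomial, add_left_comm s r m, add_assoc r s m, add_comm s m, add_assoc r m s,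
    add_left_comm m r s, add_comm (m + s) r, Idx.vec_add, add_dotProduct, dotProduct_sub,
    dotProduct_smul, smul_eq_mul, dotProduct_comm u, dotProduct_comm v, dotProduct_comm w,
    kMonomial_vec_s]
  module

end Cocycles

section ToroidalAlgebra

open LieAlgebra LieModule.Cohomology

variable {N : ℕ} {𝔤 : Type*} [LieRing 𝔤] [LieAlgebra ℂ 𝔤]

/-- The semidirect sum of the vector fields and the multiloop algebra: the quotient of `g(μ,ν)` by
the ideal `K`. -/
abbrev MultiloopWitt (N : ℕ) (𝔤 : Type*) [LieRing 𝔤] [LieAlgebra ℂ 𝔤] :=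
  Multiloop N 𝔤 ⋊⁅multiloopDerivation N 𝔤⁆ WittAlgebra N

noncomputable instance : LieRingModule (MultiloopWitt N 𝔤) (Kmod N) :=
  LieRingModule.compLieHom (Kmod N) (SemiDirectSum.projr (multiloopDerivation N 𝔤))

noncomputable instance : LieModule ℂ (MultiloopWitt N 𝔤) (Kmod N) :=
  LieModule.compLieHom (Kmod N) (SemiDirectSum.projr (multiloopDerivation N 𝔤))

/-- The cocycle with values in `K` that defines `g(μ,ν)`. -/
noncomputable def toroidalCocycle (N : ℕ) {B : 𝔤 →ₗ[ℂ] 𝔤 →ₗ[ℂ] ℂ} (hBsymm : ∀ x y, B x y = B y x)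
    (hBinv : ∀ x y z, B ⁅x, y⁆ z = B x ⁅y, z⁆) (μ ν : ℂ) :
    twoCocycle ℂ (MultiloopWitt N 𝔤) (Kmod N) :=
  ⟨semidirectCochain (loopCochain N hBsymm) (wittCochain N μ ν),
    semidirectCochain_mem_twoCocycle (fun _ _ ↦ rfl) (loopPairing_lie hBinv) (lie_loopPairing B)
      (wittCochain_mem_twoCocycle μ ν)⟩

end ToroidalAlgebra

section Realization

open LieAlgebra LieAlgebra.Extension LieModule.Cohomology

variable {N : ℕ} {𝔤 : Type} [LieRing 𝔤] [LieAlgebra ℂ 𝔤]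

namespace Tor

/-- The inclusion of the summand `R ⊗ 𝔤`. -/
noncomputable def ofLoop (T : Tor N 𝔤) : Multiloop N 𝔤 →ₗ[ℂ] T.G :=
  T.e.symm.toLinearMap ∘ₗ LinearMap.inl ℂ _ _

/-- The inclusion of the summand `K`. -/
noncomputable def ofForm (T : Tor N 𝔤) : Kmod N →ₗ[ℂ] T.G :=
  T.e.symm.toLinearMap ∘ₗ LinearMap.inr ℂ _ _ ∘ₗ LinearMap.inl ℂ _ _

/-- The inclusion of the summand `D`. -/
noncomputable def ofWitt (T : Tor N 𝔤) : WittAlgebra N →ₗ[ℂ] T.G :=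
  T.e.symm.toLinearMap ∘ₗ LinearMap.inr ℂ _ _ ∘ₗ LinearMap.inr ℂ _ _

theorem e_symm_eq_sum (T : Tor N 𝔤) (f : Multiloop N 𝔤) (κ : Kmod N) (X : WittAlgebra N) :
    T.e.symm (f, κ, X) = T.ofLoop f + T.ofForm κ + T.ofWitt X := by
  have sum_inclusions (x : Carrier N 𝔤) :
      T.e.symm x = T.e.symm (x.1, 0, 0) + T.e.symm (0, x.2.1, 0) + T.e.symm (0, 0, x.2.2) := by
    simp only [← map_add, Prod.mk_add_mk, add_zero, zero_add]
  exact sum_inclusions (f, κ, X)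

theorem tg_eq_ofLoop (T : Tor N 𝔤) (r : Idx N) (x : 𝔤) : T.tg r x = T.ofLoop (.single r x) :=
  rfl

theorem k_eq_ofForm (T : Tor N 𝔤) (r : Idx N) (p : Fin (N + 1)) :
    T.k r p = T.ofForm (kMonomial r (Pi.single p 1)) :=
  rfl

theorem d_eq_ofWitt (T : Tor N 𝔤) (r : Idx N) (p : Fin (N + 1)) :
    T.d r p = T.ofWitt (WittAlgebra.monomial r (Pi.single p 1)) :=
  rfl

theorem sum_smul_k (T : Tor N 𝔤) (r : Idx N) (w : Fin (N + 1) → ℂ) :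
    ∑ p, w p • T.k r p = T.ofForm (kMonomial r w) := by
  conv_rhs => rw [pi_eq_sum_univ' w]
  simp only [k_eq_ofForm, map_sum, map_smul]

theorem kSum_eq_ofForm (T : Tor N 𝔤) (r m : Idx N) :
    T.kSum r m = T.ofForm (kMonomial (r + m) r.vec) :=
  T.sum_smul_k (r + m) r.vec

end Tor

variable {B : 𝔤 →ₗ[ℂ] 𝔤 →ₗ[ℂ] ℂ} (hBsymm : ∀ x y, B x y = B y x)
  (hBinv : ∀ x y z, B ⁅x, y⁆ z = B x ⁅y, z⁆) (μ ν : ℂ)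

/-- The full toroidal Lie algebra `g(μ,ν)`: the extension of `MultiloopWitt N 𝔤` by `Kmod N`
defined by `toroidalCocycle`. -/
noncomputable def fullToroidal (N : ℕ) : Tor N 𝔤 where
  G := ofTwoCocycle (toroidalCocycle N hBsymm hBinv μ ν)
  e :=
    { toFun x := (x.carrier.1.left, x.carrier.2, x.carrier.1.right)
      invFun x := ofProd _ (⟨x.1, x.2.2⟩, x.2.1)
      map_add' _ _ := rfl
      map_smul' _ _ := rfl }

namespace fullToroidal

theorem lie_sum_sum (f h : Multiloop N 𝔤) (κ l : Kmod N) (X Y : WittAlgebra N) :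
    letI T := fullToroidal hBsymm hBinv μ ν N
    ⁅T.ofLoop f + T.ofForm κ + T.ofWitt X, T.ofLoop h + T.ofForm l + T.ofWitt Y⁆ =
      T.ofLoop (⁅f, h⁆ + multiloopDerivation N 𝔤 X h - multiloopDerivation N 𝔤 Y f) +
        T.ofForm (loopPairing B f h + wittCochain N μ ν X Y + ⁅X, l⁆ - ⁅Y, κ⁆) +
        T.ofWitt ⁅X, Y⁆ := by
  simp only [← Tor.e_symm_eq_sum]
  rfl

theorem lie_ofLoop_ofLoop (f h : Multiloop N 𝔤) :
    letI T := fullToroidal hBsymm hBinv μ ν N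
    ⁅T.ofLoop f, T.ofLoop h⁆ = T.ofLoop ⁅f, h⁆ + T.ofForm (loopPairing B f h) := by
  simpa using lie_sum_sum hBsymm hBinv μ ν f h 0 0 0 0

theorem lie_ofForm_ofLoop (κ : Kmod N) (f : Multiloop N 𝔤) :
    letI T := fullToroidal hBsymm hBinv μ ν N
    ⁅T.ofForm κ, T.ofLoop f⁆ = 0 := by
  simpa using lie_sum_sum hBsymm hBinv μ ν 0 f κ 0 0 0

theorem lie_ofForm_ofForm (κ l : Kmod N) :
    letI T := fullToroidal hBsymm hBinv μ ν N
    ⁅T.ofForm κ, T.ofForm l⁆ = 0 := by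
  simpa using lie_sum_sum hBsymm hBinv μ ν 0 0 κ l 0 0

theorem lie_ofWitt_ofLoop (X : WittAlgebra N) (f : Multiloop N 𝔤) :
    letI T := fullToroidal hBsymm hBinv μ ν N
    ⁅T.ofWitt X, T.ofLoop f⁆ = T.ofLoop (multiloopDerivation N 𝔤 X f) := by
  simpa using lie_sum_sum hBsymm hBinv μ ν 0 f 0 0 X 0

theorem lie_ofWitt_ofForm (X : WittAlgebra N) (κ : Kmod N) :
    letI T := fullToroidal hBsymm hBinv μ ν N
    ⁅T.ofWitt X, T.ofForm κ⁆ = T.ofForm ⁅X, κ⁆ := by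
  simpa using lie_sum_sum hBsymm hBinv μ ν 0 0 0 κ X 0

theorem lie_ofWitt_ofWitt (X Y : WittAlgebra N) :
    letI T := fullToroidal hBsymm hBinv μ ν N
    ⁅T.ofWitt X, T.ofWitt Y⁆ = T.ofWitt ⁅X, Y⁆ + T.ofForm (wittCochain N μ ν X Y) := by
  simpa [add_comm] using lie_sum_sum hBsymm hBinv μ ν 0 0 0 0 X Y

theorem isToroidal : (fullToroidal hBsymm hBinv μ ν N).IsToroidal B μ ν where
  br_gg r m x y := by
    rw [Tor.tg_eq_ofLoop, Tor.tg_eq_ofLoop, lie_ofLoop_ofLoop, Multiloop.lie_single,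
      loopPairing_single, map_smul, Tor.tg_eq_ofLoop, Tor.kSum_eq_ofForm]
  br_kg r m p x := lie_ofForm_ofLoop hBsymm hBinv μ ν _ _
  br_kk r m p q := lie_ofForm_ofForm hBsymm hBinv μ ν _ _
  br_dg r m a x := by
    rw [Tor.d_eq_ofWitt, Tor.tg_eq_ofLoop, lie_ofWitt_ofLoop, multiloopDerivation_monomial_single,
      dotProduct_single_one, ← Finsupp.smul_single, map_smul]
    rfl
  br_dk r m a b := by
    rw [Tor.d_eq_ofWitt, Tor.k_eq_ofForm, lie_ofWitt_ofForm, lie_kMonomial, dotProduct_single_one,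
      single_one_dotProduct, Pi.single_apply, map_add, map_smul, map_smul, Tor.kSum_eq_ofForm]
    rfl
  br_dd r m a b := by
    rw [Tor.d_eq_ofWitt, Tor.d_eq_ofWitt, lie_ofWitt_ofWitt, WittAlgebra.lie_monomial,
      wittCochain_monomial]
    simp only [dotProduct_single_one, map_sub, map_smul]
    rw [← Tor.sum_smul_k]
    rfl

end fullToroidal

end Realization

theorem statement0_general (N : ℕ) (g : Type) [LieRing g] [LieAlgebra ℂ g]
    (B : g →ₗ[ℂ] g →ₗ[ℂ] ℂ)
    (hBsymm : ∀ x y : g, B x y = B y x)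
    (hBinv : ∀ x y z : g, B ⁅x, y⁆ z = B x ⁅y, z⁆)
    (μ ν : ℂ) :
    ∃ T : Tor N g, T.IsToroidal B μ ν :=
  ⟨fullToroidal hBsymm hBinv μ ν N, fullToroidal.isToroidal hBsymm hBinv μ ν⟩

theorem statement0 (N : ℕ) (hN : 1 ≤ N) (g : Type) [LieRing g] [LieAlgebra ℂ g]
    [FiniteDimensional ℂ g] [LieAlgebra.IsSimple ℂ g]
    (B : g →ₗ[ℂ] g →ₗ[ℂ] ℂ)
    (hBsymm : ∀ x y : g, B x y = B y x)
    (hBnondeg : ∀ x : g, (∀ y : g, B x y = 0) → x = 0)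
    (hBinv : ∀ x y z : g, B ⁅x, y⁆ z = B x ⁅y, z⁆)
    (μ ν : ℂ) :
    ∃ T : Tor N g, T.IsToroidal B μ ν :=
  statement0_general N g B hBsymm hBinv μ ν

end ToroidalPaper
end

section
/- Let ḟ be a Lie algebra over ℂ, let Z₁ and Z₂ be complex vector spaces, let φ: ḟ × ḟ → Z₁ be a symmetric bilinear map satisfying the invariance φ([x,y],z) = φ(x,[y,z]) for all x,y,z ∈ ḟ, and let ψ: ḟ → Z₂ be a linear map vanishing on [ḟ,ḟ]. Then on the vector space f = (⊕_{n∈ℤ} ℂL(n)) ⊕ (ℂ[t₀,t₀^{-1}]⊗ḟ) ⊕ Z₁ ⊕ Z₂ ⊕ ℂC_Vir, the bracket defined by [L(n),L(m)] = (n−m)L(n+m) + ((n³−n)/12)δ_{n,−m}C_Vir, [L(n), f(m)] = −m f(n+m) − (n²+n)δ_{n,−m}ψ(f), [f(n), g(m)] = [f,g](n+m) + n δ_{n,−m}φ(f,g), with Z₁ ⊕ Z₂ ⊕ ℂC_Vir central (here f(n) denotes t₀^n⊗f for f ∈ ḟ, n ∈ ℤ), is alternating and satisfies the Jacobi identity;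 hence f is a Lie algebra, and it is a central extension of the semidirect product ˜f = Der ℂ[t₀,t₀^{-1}] ⋉ (ℂ[t₀,t₀^{-1}]⊗ḟ), where L(n) corresponds to −t₀^{n+1} d/dt₀. -/
/-!
STATEMENT 8: the bracket of the twisted Virasoro-affine algebra
f = (⊕ₙ ℂL(n)) ⊕ (ℂ[t₀,t₀⁻¹]⊗ḟ) ⊕ Z₁ ⊕ Z₂ ⊕ ℂC_Vir is alternating and
satisfies the Jacobi identity, so f is a Lie algebra; moreover f is a central
extension of ˜f = Der ℂ[t₀,t₀⁻¹] ⋉ (ℂ[t₀,t₀⁻¹]⊗ḟ).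
-/

namespace ToroidalPaper8

noncomputable section

variable (fdot Z1 Z2 : Type) [LieRing fdot] [LieAlgebra ℂ fdot]
  [AddCommGroup Z1] [Module ℂ Z1] [AddCommGroup Z2] [Module ℂ Z2]

/-- A realization of the vector space
f = (⊕_{n∈ℤ} ℂL(n)) ⊕ (ℂ[t₀,t₀⁻¹]⊗ḟ) ⊕ Z₁ ⊕ Z₂ ⊕ ℂC_Vir as a Lie algebra. -/
structure VAAlg where
  F : Type
  [instLieRing : LieRing F]
  [instLieAlgebra : LieAlgebra ℂ F]
  e : F ≃ₗ[ℂ] (ℤ →₀ ℂ) × (ℤ →₀ fdot) × Z1 × Z2 × ℂ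

attribute [instance] VAAlg.instLieRing VAAlg.instLieAlgebra

namespace VAAlg

variable {fdot Z1 Z2}
variable [LieRing fdot] [LieAlgebra ℂ fdot] [AddCommGroup Z1] [Module ℂ Z1]
  [AddCommGroup Z2] [Module ℂ Z2] (A : VAAlg fdot Z1 Z2)

/-- the Virasoro generator L(n) = −t₀^{n+1} d/dt₀ -/
def L (n : ℤ) : A.F := A.e.symm (Finsupp.single n 1, 0, 0, 0, 0)

/-- the loop element f(n) = t₀^n ⊗ f -/
def af (n : ℤ) (f : fdot) : A.F := A.e.symm (0, Finsupp.single n f, 0, 0, 0)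

/-- the central elements coming from Z₁ = S²(ḟ)^inv -/
def z1 (z : Z1) : A.F := A.e.symm (0, 0, z, 0, 0)

/-- the central elements coming from Z₂ = ḟ^inv -/
def z2 (z : Z2) : A.F := A.e.symm (0, 0, 0, z, 0)

/-- the Virasoro central element C_Vir -/
def CVir : A.F := A.e.symm (0, 0, 0, 0, 1)

/-- The twisted Virasoro-affine bracket relations (3.12)-(3.14). -/
structure IsVA (φ : fdot →ₗ[ℂ] fdot →ₗ[ℂ] Z1) (ψ : fdot →ₗ[ℂ] Z2) : Prop where
  br_LL : ∀ n m : ℤ,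
    ⁅A.L n, A.L m⁆ = ((n - m : ℤ) : ℂ) • A.L (n + m)
      + (if n + m = 0 then ((n : ℂ) ^ 3 - (n : ℂ)) / 12 else 0) • A.CVir
  br_Lf : ∀ (n m : ℤ) (f : fdot),
    ⁅A.L n, A.af m f⁆ = (-(m : ℂ)) • A.af (n + m) f
      - (if n + m = 0 then ((n : ℂ) ^ 2 + (n : ℂ)) else 0) • A.z2 (ψ f)
  br_ff : ∀ (n m : ℤ) (f h : fdot),
    ⁅A.af n f, A.af m h⁆ = A.af (n + m) ⁅f, h⁆
      + (if n + m = 0 then (n : ℂ) else 0) • A.z1 (φ f h)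
  central_z1 : ∀ (z : Z1) (x : A.F), ⁅A.z1 z, x⁆ = 0
  central_z2 : ∀ (z : Z2) (x : A.F), ⁅A.z2 z, x⁆ = 0
  central_CVir : ∀ x : A.F, ⁅A.CVir, x⁆ = 0

end VAAlg

/-- A realization of ˜f = Der ℂ[t₀,t₀⁻¹] ⋉ (ℂ[t₀,t₀⁻¹]⊗ḟ) as a Lie algebra,
with L(n) corresponding to −t₀^{n+1}d/dt₀. -/
structure TfAlg where
  F : Type
  [instLieRing : LieRing F]
  [instLieAlgebra : LieAlgebra ℂ F]
  e : F ≃ₗ[ℂ] (ℤ →₀ ℂ) × (ℤ →₀ fdot)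

attribute [instance] TfAlg.instLieRing TfAlg.instLieAlgebra

namespace TfAlg

variable {fdot}
variable [LieRing fdot] [LieAlgebra ℂ fdot] (A : TfAlg fdot)

/-- L(n) = −t₀^{n+1}d/dt₀ ∈ Der ℂ[t₀,t₀⁻¹] -/
def L (n : ℤ) : A.F := A.e.symm (Finsupp.single n 1, 0)

/-- f(n) = t₀^n ⊗ f -/
def af (n : ℤ) (f : fdot) : A.F := A.e.symm (0, Finsupp.single n f)

/-- the bracket relations of the semidirect product
˜f = Der ℂ[t₀,t₀⁻¹] ⋉ (ℂ[t₀,t₀⁻¹]⊗ḟ) -/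
structure IsTf : Prop where
  br_LL : ∀ n m : ℤ, ⁅A.L n, A.L m⁆ = ((n - m : ℤ) : ℂ) • A.L (n + m)
  br_Lf : ∀ (n m : ℤ) (f : fdot), ⁅A.L n, A.af m f⁆ = (-(m : ℂ)) • A.af (n + m) f
  br_ff : ∀ (n m : ℤ) (f h : fdot), ⁅A.af n f, A.af m h⁆ = A.af (n + m) ⁅f, h⁆

end TfAlg

/-!
All three components of the central term are residues. Writing `∂ = d/dt` and vector fields as
`h ∂`, with `h = -t ^ (n + 1)` for `L(n)`, they are

* `(a ⊗ x, b ⊗ y) ↦ Res (∂a · b) φ(x, y)` on the loop algebra,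
* `(h ∂, a ⊗ x) ↦ Res (∂²h · a) ψ(x)` between vector fields and loops,
* `(h ∂, k ∂) ↦ (1/12) Res (∂³h · k)` on the vector fields.

The Jacobi identity of `˜f` comes for free from its being a semidirect sum, so that the Jacobi
identity of `f` amounts to the cocycle identity for these forms. Each instance of the latter is an
integration by parts: the two sides differ by the residue of a derivative, which vanishes. This
works for any derivation `d` of a commutative algebra and any functional `res` with `res ∘ d = 0`,
and Laurent polynomials enter only through the values of the forms on monomials.
-/

open scoped TensorProduct LaurentPolynomial
open LieAlgebra

section CentralExtension

variable {R L M N : Type*} [CommRing R] [LieRing L] [LieAlgebra R L]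
  [AddCommGroup M] [Module R M] [AddCommGroup N] [Module R N]

/-- A Lie algebra `2`-cocycle with values in a trivial module, as a predicate on bilinear maps:
unlike `LieModule.Cohomology.twoCocycle` it needs no module structure of `L` on `M`. -/
structure IsTwoCocycle (ω : L →ₗ[R] L →ₗ[R] M) : Prop where
  isAlt : ω.IsAlt
  map_lie : ∀ x y z, ω x ⁅y, z⁆ = ω ⁅x, y⁆ z + ω y ⁅x, z⁆

namespace IsTwoCocycle

variable {ω : L →ₗ[R] L →ₗ[R] M}

theorem compr₂ (hω : IsTwoCocycle ω) (f : M →ₗ[R] N) : IsTwoCocycle (ω.compr₂ f) where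
  isAlt x := by simp [hω.isAlt x]
  map_lie x y z := by simp [hω.map_lie x y z]

/-- A `2`-cocycle as an element of Mathlib's space of cocycles, with trivial coefficients. -/
def toTwoCocycle (hω : IsTwoCocycle ω) :
    LieModule.Cohomology.twoCocycle R L (TrivialLieModule R L M) :=
  ⟨⟨ω.compr₂ (TrivialLieModule.equiv R L M).symm, (hω.compr₂ _).isAlt⟩,
    (LieModule.Cohomology.mem_twoCocycle_iff_of_trivial R L _ _).2 (hω.compr₂ _).map_lie⟩

/-- The central extension of `L` by `M` defined by a `2`-cocycle. -/
abbrev centralExtension (hω : IsTwoCocycle ω) : Type _ :=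
  ofTwoCocycle hω.toTwoCocycle

variable (hω : IsTwoCocycle ω)

/-- The underlying vector space of a central extension is `L × M`. -/
def centralExtensionEquivProd : hω.centralExtension ≃ₗ[R] L × M where
  __ := (ofProd hω.toTwoCocycle).symm
  map_add' _ _ := rfl
  map_smul' _ _ := rfl

theorem centralExtensionEquivProd_lie (x y : hω.centralExtension) :
    hω.centralExtensionEquivProd ⁅x, y⁆ =
      (⁅(hω.centralExtensionEquivProd x).1, (hω.centralExtensionEquivProd y).1⁆,
        ω (hω.centralExtensionEquivProd x).1 (hω.centralExtensionEquivProd y).1) := by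
  have trivial_action (u : L) (m : TrivialLieModule R L M) : ⁅u, m⁆ = 0 := trivial_lie_zero _ _ _ _
  refine Prod.ext rfl ?_
  simp only [bracket_ofTwoCocycle, trivial_action, add_zero, sub_zero]
  rfl

theorem lie_centralExtensionEquivProd_symm (x y : L × M) :
    ⁅hω.centralExtensionEquivProd.symm x, hω.centralExtensionEquivProd.symm y⁆ =
      hω.centralExtensionEquivProd.symm (⁅x.1, y.1⁆, ω x.1 y.1) := by
  rw [LinearEquiv.eq_symm_apply]
  simp only [centralExtensionEquivProd_lie, LinearEquiv.apply_symm_apply]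

/-- The projection of a central extension of `L` onto `L`. -/
def centralExtensionProj : hω.centralExtension →ₗ⁅R⁆ L where
  __ := LinearMap.fst R L M ∘ₗ hω.centralExtensionEquivProd.toLinearMap
  map_lie' := rfl

theorem centralExtensionProj_surjective : Function.Surjective hω.centralExtensionProj :=
  fun x ↦ ⟨hω.centralExtensionEquivProd.symm (x, 0), rfl⟩

theorem lie_eq_zero_of_centralExtensionProj_eq_zero {x : hω.centralExtension}
    (hx : hω.centralExtensionProj x = 0) (y : hω.centralExtension) : ⁅x, y⁆ = 0 := by
  have hx' : (hω.centralExtensionEquivProd x).1 = 0 := hx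
  apply hω.centralExtensionEquivProd.injective
  simp only [centralExtensionEquivProd_lie, hx', zero_lie, map_zero, LinearMap.zero_apply]
  rfl

end IsTwoCocycle

end CentralExtension

section SemiDirectSum

variable {R K L M : Type*} [CommRing R] [LieRing K] [LieAlgebra R K] [LieRing L] [LieAlgebra R L]
  [AddCommGroup M] [Module R M]

/-- The bilinear map on `K ⋊⁅ρ⁆ L` that restricts to `γ` on `K`, to `α` on `L`, to `β` on `L × K`,
and to minus the flip of `β` on `K × L`. -/
def semiDirectForm (ρ : L →ₗ⁅R⁆ LieDerivation R K K) (α : L →ₗ[R] L →ₗ[R] M)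
    (β : L →ₗ[R] K →ₗ[R] M) (γ : K →ₗ[R] K →ₗ[R] M) : K ⋊⁅ρ⁆ L →ₗ[R] K ⋊⁅ρ⁆ L →ₗ[R] M :=
  let left := SemiDirectSum.projl ρ
  let right := (SemiDirectSum.projr ρ).toLinearMap
  α.compl₁₂ right right + β.compl₁₂ right left - (β.compl₁₂ right left).flip +
    γ.compl₁₂ left left

variable {ρ : L →ₗ⁅R⁆ LieDerivation R K K} {α : L →ₗ[R] L →ₗ[R] M} {β : L →ₗ[R] K →ₗ[R] M}
  {γ : K →ₗ[R] K →ₗ[R] M}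

@[simp]
theorem semiDirectForm_apply (x y : K ⋊⁅ρ⁆ L) :
    semiDirectForm ρ α β γ x y =
      α x.right y.right + β x.right y.left - β y.right x.left + γ x.left y.left :=
  rfl

theorem isTwoCocycle_semiDirectForm (hα : IsTwoCocycle α) (hγ : IsTwoCocycle γ)
    (hβ : ∀ D E x, β ⁅D, E⁆ x = β D (ρ E x) - β E (ρ D x))
    (hβγ : ∀ D x y, β D ⁅x, y⁆ = γ (ρ D x) y + γ x (ρ D y)) :
    IsTwoCocycle (semiDirectForm ρ α β γ) where
  isAlt x := by simp [hα.isAlt x.right, hγ.isAlt x.left]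
  map_lie x y z := by
    have hγ_skew : ∀ u v, -γ u v = γ v u := hγ.isAlt.neg
    simp only [semiDirectForm_apply, SemiDirectSum.lie_eq_mk, map_add, map_sub,
      LinearMap.add_apply, LinearMap.sub_apply, hα.map_lie x.right, hγ.map_lie x.left, hβ, hβγ,
      ← hγ_skew y.left (ρ z.right x.left), ← hγ_skew z.left (ρ x.right y.left),
      ← hγ_skew z.left (ρ y.right x.left)]
    abel

end SemiDirectSum

section VectorFields

variable {R A 𝔤 M : Type*} [CommRing R] [CommRing A] [Algebra R A] [LieRing 𝔤] [LieAlgebra R 𝔤]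
  [AddCommGroup M] [Module R M]

/-- The bilinear map `(a, b) ↦ res (d a * b)`. -/
def residueForm (d : Derivation R A A) (res : A →ₗ[R] R) : A →ₗ[R] A →ₗ[R] R :=
  (LinearMap.mul R A).compr₂ res ∘ₗ d.toLinearMap

@[simp]
theorem residueForm_apply (d : Derivation R A A) (res : A →ₗ[R] R) (a b : A) :
    residueForm d res a b = res (d a * b) :=
  rfl

/-- The affine Kac–Moody cocycle `(a ⊗ x, b ⊗ y) ↦ res (d a * b) • φ x y` on `A ⊗ 𝔤`. -/
def affineForm (d : Derivation R A A) (res : A →ₗ[R] R) (φ : 𝔤 →ₗ[R] 𝔤 →ₗ[R] M) :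
    A ⊗[R] 𝔤 →ₗ[R] A ⊗[R] 𝔤 →ₗ[R] M :=
  (TensorProduct.map₂ (residueForm d res) φ).compr₂ (TensorProduct.lid R M).toLinearMap

@[simp]
theorem affineForm_tmul (d : Derivation R A A) (res : A →ₗ[R] R) (φ : 𝔤 →ₗ[R] 𝔤 →ₗ[R] M)
    (a b : A) (x y : 𝔤) : affineForm d res φ (a ⊗ₜ x) (b ⊗ₜ y) = res (d a * b) • φ x y := by
  simp [affineForm]

/-- The linear map sending a derivation `D` to `D t`; on a curve with coordinate `t` it is the
coefficient of the vector field `D` with respect to `d/dt`. -/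
def derivationEval (R : Type*) {A : Type*} [CommRing R] [CommRing A] [Algebra R A] (t : A) :
    Derivation R A A →ₗ[R] A where
  toFun D := D t
  map_add' _ _ := rfl
  map_smul' _ _ := rfl

@[simp]
theorem derivationEval_apply (t : A) (D : Derivation R A A) : derivationEval R t D = D t :=
  rfl

/-- The bilinear map `(D, a ⊗ x) ↦ res (d²(D t) * a) • ψ x`, which twists the action of the vector
fields on the central extension of `A ⊗ 𝔤`. -/
def twistForm (d : Derivation R A A) (res : A →ₗ[R] R) (t : A) (ψ : 𝔤 →ₗ[R] M) :
    Derivation R A A →ₗ[R] A ⊗[R] 𝔤 →ₗ[R] M :=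
  (LinearMap.rTensorHom 𝔤 ∘ₗ residueForm d res ∘ₗ d.toLinearMap ∘ₗ derivationEval R t).compr₂
    (ψ ∘ₗ (TensorProduct.lid R 𝔤).toLinearMap)

@[simp]
theorem twistForm_tmul (d : Derivation R A A) (res : A →ₗ[R] R) (t : A) (ψ : 𝔤 →ₗ[R] M)
    (D : Derivation R A A) (a : A) (x : 𝔤) :
    twistForm d res t ψ D (a ⊗ₜ x) = res (d (d (D t)) * a) • ψ x := by
  simp [twistForm]

/-- The Gelfand–Fuchs cocycle `(D, E) ↦ res (d³(D t) * E t)` on vector fields. -/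
def gelfandFuchsForm (d : Derivation R A A) (res : A →ₗ[R] R) (t : A) :
    Derivation R A A →ₗ[R] Derivation R A A →ₗ[R] R :=
  (residueForm d res ∘ₗ d.toLinearMap ∘ₗ d.toLinearMap).compl₁₂
    (derivationEval R t) (derivationEval R t)

@[simp]
theorem gelfandFuchsForm_apply (d : Derivation R A A) (res : A →ₗ[R] R) (t : A)
    (D E : Derivation R A A) : gelfandFuchsForm d res t D E = res (d (d (d (D t))) * E t) :=
  rfl

variable {d : Derivation R A A} {res : A →ₗ[R] R} {t : A}

theorem res_eq_of_sub_eq_deriv (hres : ∀ a, res (d a) = 0) {a b c : A} (h : a - b = d c) :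
    res a = res b := by
  rw [← sub_eq_zero, ← map_sub, h, hres]

theorem isTwoCocycle_affineForm [IsAddTorsionFree M] (hres : ∀ a, res (d a) = 0)
    {φ : 𝔤 →ₗ[R] 𝔤 →ₗ[R] M} (φ_symm : ∀ x y, φ x y = φ y x)
    (φ_inv : ∀ x y z, φ ⁅x, y⁆ z = φ x ⁅y, z⁆) : IsTwoCocycle (affineForm d res φ) where
  isAlt u := by
    have skew : affineForm d res φ = -(affineForm d res φ).flip := by
      ext a x b y
      have integration_by_parts : res (d a * b) = res (-(d b * a)) :=
        res_eq_of_sub_eq_deriv hres (c := a * b) (by simp [d.leibniz]; ring)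
      simp [integration_by_parts, φ_symm x y]
    exact self_eq_neg.1 (by simpa using congr($skew u u))
  map_lie u v w := by
    induction u using TensorProduct.induction_on with
    | zero => simp
    | add u₁ u₂ h₁ h₂ => simp only [map_add, add_lie, LinearMap.add_apply, h₁, h₂]; abel
    | tmul a x =>
      induction v using TensorProduct.induction_on with
      | zero => simp
      | add v₁ v₂ h₁ h₂ => simp only [map_add, add_lie, lie_add, LinearMap.add_apply, h₁, h₂]; abel
      | tmul b y =>
        induction w using TensorProduct.induction_on with
        | zero => simp
        | add w₁ w₂ h₁ h₂ => simp only [map_add, lie_add, h₁, h₂]; abel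
        | tmul c z =>
          have φ_left_comm : φ y ⁅x, z⁆ = -φ x ⁅y, z⁆ := by
            rw [← φ_inv, ← φ_inv, ← lie_skew, map_neg, LinearMap.neg_apply]
          have leibniz : d (a * b) * c = d a * (b * c) + d b * (a * c) := by
            simp only [d.leibniz, smul_eq_mul]; ring
          simp only [ExtendScalars.bracket_tmul, affineForm_tmul, φ_inv, φ_left_comm, leibniz,
            map_add, add_smul, smul_neg, add_neg_cancel_right]

theorem twistForm_lie_right {ψ : 𝔤 →ₗ[R] M} (hψ : ∀ x y : 𝔤, ψ ⁅x, y⁆ = 0) (D : Derivation R A A)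
    (u v : A ⊗[R] 𝔤) : twistForm d res t ψ D ⁅u, v⁆ = 0 := by
  induction u using TensorProduct.induction_on with
  | zero => simp
  | add u₁ u₂ h₁ h₂ => rw [add_lie, map_add, h₁, h₂, add_zero]
  | tmul a x =>
    induction v using TensorProduct.induction_on with
    | zero => simp
    | add v₁ v₂ h₁ h₂ => rw [lie_add, map_add, h₁, h₂, add_zero]
    | tmul b y => rw [ExtendScalars.bracket_tmul, twistForm_tmul, hψ, smul_zero]

section

variable (hres : ∀ a, res (d a) = 0) (ht : ∀ (D : Derivation R A A) a, D a = D t * d a)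

include hres ht

theorem affineForm_derivation_add (φ : 𝔤 →ₗ[R] 𝔤 →ₗ[R] M) (D : Derivation R A A)
    (u v : A ⊗[R] 𝔤) :
    affineForm d res φ (Lie.Derivation.ofDerivation 𝔤 D u) v +
      affineForm d res φ u (Lie.Derivation.ofDerivation 𝔤 D v) = 0 := by
  induction u using TensorProduct.induction_on with
  | zero => simp
  | add u₁ u₂ h₁ h₂ =>
    simp only [map_add, LinearMap.add_apply]
    rw [add_add_add_comm, h₁, h₂, add_zero]
  | tmul a x =>
    induction v using TensorProduct.induction_on with
    | zero => simp
    | add v₁ v₂ h₁ h₂ =>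
      simp only [map_add]
      rw [add_add_add_comm, h₁, h₂, add_zero]
    | tmul b y =>
      have total_derivative : d (D a) * b + d a * D b = d (D t * d a * b) := by
        rw [ht D a, ht D b]
        simp only [d.leibniz, smul_eq_mul]
        ring
      have invariance : res (d (D a) * b) + res (d a * D b) = 0 := by
        rw [← map_add, total_derivative, hres]
      simp [← add_smul, invariance]

theorem twistForm_lie_left (ψ : 𝔤 →ₗ[R] M) (D E : Derivation R A A) (u : A ⊗[R] 𝔤) :
    twistForm d res t ψ ⁅D, E⁆ u =
      twistForm d res t ψ D (Lie.Derivation.ofDerivation 𝔤 E u) -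
        twistForm d res t ψ E (Lie.Derivation.ofDerivation 𝔤 D u) := by
  induction u using TensorProduct.induction_on with
  | zero => simp
  | add u₁ u₂ h₁ h₂ => simp only [map_add, h₁, h₂]; abel
  | tmul a x =>
    have integration_by_parts : res (d (d (⁅D, E⁆ t)) * a) =
        res (d (d (D t)) * E a - d (d (E t)) * D a) := by
      refine res_eq_of_sub_eq_deriv hres (c := (D t * d (d (E t)) - d (d (D t)) * E t) * a) ?_
      rw [Derivation.commutator_apply, ht D (E t), ht E (D t), ht D a, ht E a]
      simp only [d.leibniz, smul_eq_mul, map_sub, map_add]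
      ring
    simp [integration_by_parts, sub_smul]

theorem isTwoCocycle_gelfandFuchsForm [IsAddTorsionFree R] :
    IsTwoCocycle (gelfandFuchsForm d res t) where
  isAlt D := by
    have skew : res (d (d (d (D t))) * D t) = res (-(d (d (d (D t))) * D t)) := by
      refine res_eq_of_sub_eq_deriv hres (c := 2 * d (d (D t)) * D t - d (D t) * d (D t)) ?_
      simp only [d.leibniz, smul_eq_mul, map_sub, two_mul, map_add]
      ring
    exact self_eq_neg.1 (by simpa using skew)
  map_lie D E F := by
    simp only [gelfandFuchsForm_apply, ← map_add]
    refine res_eq_of_sub_eq_deriv hres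
      (c := d (d (d (D t))) * E t * F t - D t * d (d (d (E t))) * F t) ?_
    rw [Derivation.commutator_apply, Derivation.commutator_apply, Derivation.commutator_apply,
      ht D (E t), ht E (D t), ht D (F t), ht F (D t), ht E (F t), ht F (E t)]
    simp only [d.leibniz, smul_eq_mul, map_sub, map_add]
    ring

end

end VectorFields

section Laurent

open LaurentPolynomial

variable {R : Type*} [CommRing R]

theorem laurentLinearMap_ext {N : Type*} [AddCommMonoid N] [Module R N] {f g : R[T;T⁻¹] →ₗ[R] N}
    (h : ∀ n, f (T n) = g (T n)) : f = g :=
  (AddMonoidAlgebra.basis ℤ R).ext fun n ↦ by rw [AddMonoidAlgebra.basis_apply]; exact h n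

/-- The derivative `d/dT` of Laurent polynomials, as a linear map; see `laurentDeriv`. -/
def laurentDerivAux (R : Type*) [CommRing R] : R[T;T⁻¹] →ₗ[R] R[T;T⁻¹] :=
  (AddMonoidAlgebra.basis ℤ R).constr R fun n ↦ (n : R) • T (n - 1)

theorem laurentDerivAux_T (n : ℤ) : laurentDerivAux R (T n) = (n : R) • T (n - 1) := by
  rw [laurentDerivAux, T, ← AddMonoidAlgebra.basis_apply, Module.Basis.constr_basis]

theorem laurentDerivAux_mul (f g : R[T;T⁻¹]) :
    laurentDerivAux R (f * g) = f * laurentDerivAux R g + g * laurentDerivAux R f := by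
  have h : (LinearMap.mul R _).compr₂ (laurentDerivAux R) =
      (LinearMap.mul R _).compl₂ (laurentDerivAux R) +
        ((LinearMap.mul R _).compl₂ (laurentDerivAux R)).flip := by
    refine laurentLinearMap_ext fun m ↦ laurentLinearMap_ext fun n ↦ ?_
    have exponent : n + (m - 1) = m + (n - 1) := by ring
    simp only [LinearMap.compr₂_apply, LinearMap.add_apply, LinearMap.flip_apply,
      LinearMap.compl₂_apply, LinearMap.mul_apply', ← T_add, laurentDerivAux_T, mul_smul_comm,
      exponent, ← add_smul, add_sub_assoc, Int.cast_add, add_comm (m : R)]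
  exact congr($h f g)

/-- The derivative `d/dT` of Laurent polynomials. -/
def laurentDeriv (R : Type*) [CommRing R] : Derivation R R[T;T⁻¹] R[T;T⁻¹] :=
  Derivation.mk' (laurentDerivAux R) laurentDerivAux_mul

@[simp]
theorem laurentDeriv_T (n : ℤ) : laurentDeriv R (T n) = (n : R) • T (n - 1) :=
  laurentDerivAux_T n

theorem derivation_T (D : Derivation R R[T;T⁻¹] R[T;T⁻¹]) (n : ℤ) :
    D (T n) = n • (T (n - 1) * D (T 1)) := by
  let logDeriv : ℤ →+ R[T;T⁻¹] := AddMonoidHom.mk' (fun n ↦ T (-n) * D (T n)) fun m n ↦ by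
    simp only [T_add, D.leibniz, neg_add, smul_eq_mul]
    have (k : ℤ) : T k * T (-k) = (1 : R[T;T⁻¹]) := by rw [← T_add, add_neg_cancel, T_zero]
    linear_combination T (-n) * D (T n) * this m + T (-m) * D (T m) * this n
  have h : T (-n) * D (T n) = n • (T (-1) * D (T 1)) := by
    simpa [logDeriv] using map_zsmul logDeriv n 1
  rw [sub_eq_add_neg, T_add, mul_assoc, ← mul_smul_comm, ← h, ← mul_assoc, ← T_add,
    add_neg_cancel, T_zero, one_mul]

theorem derivation_eq_mul_laurentDeriv (D : Derivation R R[T;T⁻¹] R[T;T⁻¹]) (f : R[T;T⁻¹]) :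
    D f = D (T 1) * laurentDeriv R f := by
  have h : D.toLinearMap = (D (T 1) • laurentDeriv R).toLinearMap :=
    laurentLinearMap_ext fun n ↦ by
      change D (T n) = D (T 1) * laurentDeriv R (T n)
      rw [derivation_T D n, laurentDeriv_T, mul_smul_comm, mul_comm, Int.cast_smul_eq_zsmul]
  exact congr($h f)

/-- A derivation of the Laurent polynomials is determined by its value at `T`, which is
arbitrary. -/
def laurentDerivationEquiv (R : Type*) [CommRing R] :
    Derivation R R[T;T⁻¹] R[T;T⁻¹] ≃ₗ[R] R[T;T⁻¹] where
  __ := derivationEval R (T 1)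
  invFun f := f • laurentDeriv R
  left_inv D := Derivation.ext fun f ↦ (derivation_eq_mul_laurentDeriv D f).symm
  right_inv f := by simp

/-- The residue of a Laurent polynomial `f`, more precisely that of the differential `f dT`. -/
def residue (R : Type*) [CommRing R] : R[T;T⁻¹] →ₗ[R] R :=
  Finsupp.lapply (-1) ∘ₗ (AddMonoidAlgebra.coeffLinearEquiv R).toLinearMap

@[simp]
theorem residue_T (n : ℤ) : residue R (T n) = if n = -1 then 1 else 0 :=
  T_apply (-1) n

theorem residue_laurentDeriv (f : R[T;T⁻¹]) : residue R (laurentDeriv R f) = 0 := by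
  have h : residue R ∘ₗ (laurentDeriv R).toLinearMap = 0 := laurentLinearMap_ext fun n ↦ by
    by_cases hn : n = 0 <;> simp [hn]
  exact congr($h f)

/-- The basis `L n = -T ^ (n + 1) d/dT` of the Witt algebra of derivations of the Laurent
polynomials. -/
def wittBasis (R : Type*) [CommRing R] : Module.Basis ℤ R (Derivation R R[T;T⁻¹] R[T;T⁻¹]) :=
  ((AddMonoidAlgebra.basis ℤ R).reindex (Equiv.subRight 1)).map
    ((laurentDerivationEquiv R).trans (LinearEquiv.neg R)).symm

theorem wittBasis_eq (n : ℤ) : wittBasis R n = -((T (n + 1) : R[T;T⁻¹]) • laurentDeriv R) := by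
  simp only [wittBasis, Module.Basis.map_apply, Module.Basis.reindex_apply,
    AddMonoidAlgebra.basis_apply]
  exact neg_smul (T (n + 1) : R[T;T⁻¹]) (laurentDeriv R)

@[simp]
theorem wittBasis_apply_T (n m : ℤ) : wittBasis R n (T m) = -(m : R) • T (n + m) := by
  rw [wittBasis_eq, Derivation.neg_apply, Derivation.smul_apply, laurentDeriv_T, smul_eq_mul,
    mul_smul_comm, ← T_add, neg_smul]
  congr 3
  ring

theorem lie_wittBasis (n m : ℤ) :
    ⁅wittBasis R n, wittBasis R m⁆ = ((n - m : ℤ) : R) • wittBasis R (n + m) := by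
  apply (laurentDerivationEquiv R).injective
  change ⁅wittBasis R n, wittBasis R m⁆ (T 1) = (((n - m : ℤ) : R) • wittBasis R (n + m)) (T 1)
  have exponent : m + (n + 1) = n + (m + 1) := by ring
  simp only [Derivation.commutator_apply, Derivation.smul_apply, wittBasis_apply_T,
    Derivation.map_smul, exponent, smul_smul, ← sub_smul, add_assoc]
  congr 1
  push_cast
  ring


variable {𝔤 M N : Type*} [LieRing 𝔤] [LieAlgebra R 𝔤] [AddCommGroup M] [Module R M]
  [AddCommGroup N] [Module R N]

theorem affineForm_T_tmul (φ : 𝔤 →ₗ[R] 𝔤 →ₗ[R] M) (n m : ℤ) (x y : 𝔤) :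
    affineForm (laurentDeriv R) (residue R) φ (T n ⊗ₜ x) (T m ⊗ₜ y) =
      (if n + m = 0 then (n : R) else 0) • φ x y := by
  have exponent : n - 1 + m = -1 ↔ n + m = 0 := by lia
  simp only [affineForm_tmul, laurentDeriv_T, smul_mul_assoc, ← T_add, map_smul, residue_T,
    exponent, smul_eq_mul, mul_ite, mul_one, mul_zero]

theorem twistForm_wittBasis_tmul (ψ : 𝔤 →ₗ[R] M) (n m : ℤ) (x : 𝔤) :
    twistForm (laurentDeriv R) (residue R) (T 1) ψ (wittBasis R n) (T m ⊗ₜ x) =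
      -(if n + m = 0 then (n : R) ^ 2 + n else 0) • ψ x := by
  have exponent : n + 1 - 1 - 1 + m = -1 ↔ n + m = 0 := by lia
  simp only [twistForm_tmul, wittBasis_apply_T, Derivation.map_smul, laurentDeriv_T,
    smul_mul_assoc, ← T_add, map_smul, residue_T, exponent, smul_eq_mul]
  congr 1
  split_ifs <;> push_cast <;> ring

theorem gelfandFuchsForm_wittBasis (n m : ℤ) :
    gelfandFuchsForm (laurentDeriv R) (residue R) (T 1) (wittBasis R n) (wittBasis R m) =
      if n + m = 0 then (n : R) ^ 3 - n else 0 := by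
  have exponent : n + 1 - 1 - 1 - 1 + (m + 1) = -1 ↔ n + m = 0 := by lia
  simp only [gelfandFuchsForm_apply, wittBasis_apply_T, Derivation.map_smul, laurentDeriv_T,
    smul_mul_assoc, mul_smul_comm, ← T_add, map_smul, residue_T, exponent, smul_eq_mul]
  split_ifs <;> push_cast <;> ring

/-- The semidirect sum `Der R[T;T⁻¹] ⋉ (R[T;T⁻¹] ⊗ 𝔤)` of the Witt algebra and a loop algebra. -/
abbrev WittLoop (R 𝔤 : Type*) [CommRing R] [LieRing 𝔤] [LieAlgebra R 𝔤] : Type _ :=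
  (R[T;T⁻¹] ⊗[R] 𝔤) ⋊⁅Lie.Derivation.ofDerivation 𝔤⁆ Derivation R R[T;T⁻¹] R[T;T⁻¹]

/-- The coordinates of `WittLoop R 𝔤` with respect to the bases `wittBasis` and `T ^ n`. -/
def wittLoopEquiv (R 𝔤 : Type*) [CommRing R] [LieRing 𝔤] [LieAlgebra R 𝔤] :
    WittLoop R 𝔤 ≃ₗ[R] (ℤ →₀ R) × (ℤ →₀ 𝔤) :=
  SemiDirectSum.toProdl _ ≪≫ₗ LinearEquiv.prodComm R _ _ ≪≫ₗ
    (wittBasis R).repr.prodCongr (LoopAlgebra.toFinsupp R ℤ 𝔤)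

/-- The element `L n = -T ^ (n + 1) d/dT` of `WittLoop R 𝔤`. -/
def wittElement (R 𝔤 : Type*) [CommRing R] [LieRing 𝔤] [LieAlgebra R 𝔤] (n : ℤ) : WittLoop R 𝔤 :=
  ⟨0, wittBasis R n⟩

/-- The element `x(n) = T ^ n ⊗ x` of `WittLoop R 𝔤`. -/
def loopElement (R : Type*) {𝔤 : Type*} [CommRing R] [LieRing 𝔤] [LieAlgebra R 𝔤]
    (n : ℤ) (x : 𝔤) : WittLoop R 𝔤 :=
  ⟨T n ⊗ₜ x, 0⟩

theorem wittLoopEquiv_symm_single_left (n : ℤ) :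
    (wittLoopEquiv R 𝔤).symm (Finsupp.single n 1, 0) = wittElement R 𝔤 n := by
  rw [LinearEquiv.symm_apply_eq]
  simp [wittLoopEquiv, wittElement]

theorem wittLoopEquiv_symm_single_right (n : ℤ) (x : 𝔤) :
    (wittLoopEquiv R 𝔤).symm (0, Finsupp.single n x) = loopElement R n x := by
  rw [LinearEquiv.symm_apply_eq]
  simp [wittLoopEquiv, loopElement, T, -single_eq_C_mul_T]

theorem lie_wittElement_wittElement (n m : ℤ) :
    ⁅wittElement R 𝔤 n, wittElement R 𝔤 m⁆ =
      ((n - m : ℤ) : R) • wittElement R 𝔤 (n + m) := by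
  simp only [wittElement, SemiDirectSum.lie_eq_mk, SemiDirectSum.smul_eq_mk, lie_wittBasis,
    lie_self, map_zero, add_zero, sub_zero, smul_zero]

theorem lie_wittElement_loopElement (n m : ℤ) (x : 𝔤) :
    ⁅wittElement R 𝔤 n, loopElement R m x⁆ =
      -(m : R) • loopElement R (n + m) x := by
  simp [wittElement, loopElement, TensorProduct.smul_tmul', -neg_smul]

theorem lie_loopElement_loopElement (n m : ℤ) (x y : 𝔤) :
    ⁅loopElement R n x, loopElement R m y⁆ = loopElement R (n + m) ⁅x, y⁆ := by
  simp [loopElement, -T_mul, ← T_add]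

/-- The cocycle on `WittLoop R 𝔤` whose components are the affine cocycle of `φ`, the twist by `ψ`
and `c` times the Gelfand–Fuchs cocycle. -/
def virasoroAffineForm (φ : 𝔤 →ₗ[R] 𝔤 →ₗ[R] M) (ψ : 𝔤 →ₗ[R] N) (c : R) :
    WittLoop R 𝔤 →ₗ[R] WittLoop R 𝔤 →ₗ[R] M × N × R :=
  semiDirectForm _
    ((gelfandFuchsForm (laurentDeriv R) (residue R) (T 1)).compr₂
      (c • (LinearMap.inr R M (N × R) ∘ₗ LinearMap.inr R N R)))
    ((twistForm (laurentDeriv R) (residue R) (T 1) ψ).compr₂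
      (LinearMap.inr R M (N × R) ∘ₗ LinearMap.inl R N R))
    ((affineForm (laurentDeriv R) (residue R) φ).compr₂ (LinearMap.inl R M (N × R)))

theorem isTwoCocycle_virasoroAffineForm [IsAddTorsionFree R] [IsAddTorsionFree M]
    {φ : 𝔤 →ₗ[R] 𝔤 →ₗ[R] M} (φ_symm : ∀ x y, φ x y = φ y x)
    (φ_inv : ∀ x y z, φ ⁅x, y⁆ z = φ x ⁅y, z⁆) {ψ : 𝔤 →ₗ[R] N}
    (hψ : ∀ x y : 𝔤, ψ ⁅x, y⁆ = 0) (c : R) :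
    IsTwoCocycle (virasoroAffineForm φ ψ c) := by
  refine isTwoCocycle_semiDirectForm
    (.compr₂ (isTwoCocycle_gelfandFuchsForm residue_laurentDeriv derivation_eq_mul_laurentDeriv) _)
    (.compr₂ (isTwoCocycle_affineForm residue_laurentDeriv φ_symm φ_inv) _) (fun D E u ↦ ?_)
    fun D u v ↦ ?_
  · simp only [LinearMap.compr₂_apply, ← map_sub]
    rw [twistForm_lie_left residue_laurentDeriv derivation_eq_mul_laurentDeriv]
  · simp only [LinearMap.compr₂_apply, ← map_add]
    rw [twistForm_lie_right hψ,
      affineForm_derivation_add residue_laurentDeriv derivation_eq_mul_laurentDeriv, map_zero,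
      map_zero]

section

variable (φ : 𝔤 →ₗ[R] 𝔤 →ₗ[R] M) (ψ : 𝔤 →ₗ[R] N) (c : R) (n m : ℤ)

theorem virasoroAffineForm_wittElement_wittElement :
    virasoroAffineForm φ ψ c (wittElement R 𝔤 n) (wittElement R 𝔤 m) =
      (0, 0, c * if n + m = 0 then (n : R) ^ 3 - n else 0) := by
  simp [virasoroAffineForm, wittElement, -gelfandFuchsForm_apply, gelfandFuchsForm_wittBasis]

theorem virasoroAffineForm_wittElement_loopElement (x : 𝔤) :
    virasoroAffineForm φ ψ c (wittElement R 𝔤 n) (loopElement R m x) =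
      (0, -(if n + m = 0 then (n : R) ^ 2 + n else 0) • ψ x, 0) := by
  simp [virasoroAffineForm, wittElement, loopElement, -twistForm_tmul, twistForm_wittBasis_tmul]

theorem virasoroAffineForm_loopElement_loopElement (x y : 𝔤) :
    virasoroAffineForm φ ψ c (loopElement R n x) (loopElement R m y) =
      ((if n + m = 0 then (n : R) else 0) • φ x y, 0, 0) := by
  simp [virasoroAffineForm, loopElement, -affineForm_tmul, affineForm_T_tmul]
  rfl

end

end Laurent

section Realization

variable {fdot Z1 Z2}

variable (fdot) in
/-- The realization of `˜f` by the semidirect sum of the Witt algebra and the loop algebra. -/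
def wittLoopAlg : TfAlg fdot where
  F := WittLoop ℂ fdot
  e := wittLoopEquiv ℂ fdot

theorem wittLoopAlg_L (n : ℤ) : (wittLoopAlg fdot).L n = wittElement ℂ fdot n :=
  wittLoopEquiv_symm_single_left n

theorem wittLoopAlg_af (n : ℤ) (f : fdot) : (wittLoopAlg fdot).af n f = loopElement ℂ n f :=
  wittLoopEquiv_symm_single_right n f

theorem isTf_wittLoopAlg : (wittLoopAlg fdot).IsTf where
  br_LL n m := by
    simp only [wittLoopAlg_L]
    exact lie_wittElement_wittElement n m
  br_Lf n m f := by
    simp only [wittLoopAlg_L, wittLoopAlg_af]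
    exact lie_wittElement_loopElement n m f
  br_ff n m f h := by
    simp only [wittLoopAlg_af]
    exact lie_loopElement_loopElement n m f h

section

variable {ω : WittLoop ℂ fdot →ₗ[ℂ] WittLoop ℂ fdot →ₗ[ℂ] Z1 × Z2 × ℂ} (hω : IsTwoCocycle ω)

/-- The realization of the vector space `f` by a central extension of `˜f`. It is reducible so that
the Lie algebra structure on `F` is seen to be that of `hω.centralExtension`. -/
abbrev centralExtensionAlg : VAAlg fdot Z1 Z2 where
  F := hω.centralExtension
  e := hω.centralExtensionEquivProd ≪≫ₗ (wittLoopEquiv ℂ fdot).prodCongr (.refl ℂ _) ≪≫ₗ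
    LinearEquiv.prodAssoc ℂ _ _ _

theorem centralExtensionAlg_L (n : ℤ) :
    (centralExtensionAlg hω).L n = hω.centralExtensionEquivProd.symm (wittElement ℂ fdot n, 0) :=
  congrArg (fun x ↦ hω.centralExtensionEquivProd.symm (x, 0)) (wittLoopEquiv_symm_single_left n)

theorem centralExtensionAlg_af (n : ℤ) (f : fdot) :
    (centralExtensionAlg hω).af n f = hω.centralExtensionEquivProd.symm (loopElement ℂ n f, 0) :=
  congrArg (fun x ↦ hω.centralExtensionEquivProd.symm (x, 0)) (wittLoopEquiv_symm_single_right n f)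

theorem centralExtensionAlg_z1 (z : Z1) :
    (centralExtensionAlg hω).z1 z = hω.centralExtensionEquivProd.symm (0, z, 0, 0) :=
  rfl

theorem centralExtensionAlg_z2 (z : Z2) :
    (centralExtensionAlg hω).z2 z = hω.centralExtensionEquivProd.symm (0, 0, z, 0) :=
  rfl

theorem centralExtensionAlg_CVir :
    (centralExtensionAlg hω).CVir = hω.centralExtensionEquivProd.symm (0, 0, 0, 1) :=
  rfl

end

theorem isVA_centralExtensionAlg {φ : fdot →ₗ[ℂ] fdot →ₗ[ℂ] Z1} {ψ : fdot →ₗ[ℂ] Z2}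
    (hω : IsTwoCocycle (virasoroAffineForm φ ψ 12⁻¹)) : (centralExtensionAlg hω).IsVA φ ψ where
  br_LL n m := by
    simp only [centralExtensionAlg_L, centralExtensionAlg_CVir]
    refine (hω.lie_centralExtensionEquivProd_symm _ _).trans
      (hω.centralExtensionEquivProd.symm_apply_eq.2 ?_)
    rw [lie_wittElement_wittElement, virasoroAffineForm_wittElement_wittElement, map_add, map_smul,
      map_smul]
    simp only [LinearEquiv.apply_symm_apply, Prod.smul_mk, Prod.mk_add_mk, smul_zero, add_zero,
      zero_add, smul_eq_mul, mul_one, mul_ite, mul_zero, div_eq_inv_mul]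
  br_Lf n m f := by
    simp only [centralExtensionAlg_L, centralExtensionAlg_af, centralExtensionAlg_z2]
    refine (hω.lie_centralExtensionEquivProd_symm _ _).trans
      (hω.centralExtensionEquivProd.symm_apply_eq.2 ?_)
    rw [lie_wittElement_loopElement, virasoroAffineForm_wittElement_loopElement, map_sub, map_smul,
      map_smul]
    simp only [LinearEquiv.apply_symm_apply, Prod.smul_mk, Prod.mk_sub_mk, smul_zero, sub_zero,
      zero_sub, Prod.neg_mk, neg_zero, neg_smul]
  br_ff n m f h := by
    simp only [centralExtensionAlg_af, centralExtensionAlg_z1]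
    refine (hω.lie_centralExtensionEquivProd_symm _ _).trans
      (hω.centralExtensionEquivProd.symm_apply_eq.2 ?_)
    rw [lie_loopElement_loopElement, virasoroAffineForm_loopElement_loopElement, map_add, map_smul]
    simp only [LinearEquiv.apply_symm_apply, Prod.smul_mk, Prod.mk_add_mk, smul_zero, add_zero,
      zero_add]
  central_z1 _ _ := hω.lie_eq_zero_of_centralExtensionProj_eq_zero rfl _
  central_z2 _ _ := hω.lie_eq_zero_of_centralExtensionProj_eq_zero rfl _
  central_CVir _ := hω.lie_eq_zero_of_centralExtensionProj_eq_zero rfl _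

end Realization

/-- for a symmetric invariant Z₁-valued form φ and a linear map
ψ : ḟ → Z₂ vanishing on [ḟ,ḟ], the twisted Virasoro-affine bracket makes
f = (⊕ₙ ℂL(n)) ⊕ (ℂ[t₀,t₀⁻¹]⊗ḟ) ⊕ Z₁ ⊕ Z₂ ⊕ ℂC_Vir a Lie algebra, which is a
central extension of ˜f = Der ℂ[t₀,t₀⁻¹] ⋉ (ℂ[t₀,t₀⁻¹]⊗ḟ). -/
theorem statement8 (fdot Z1 Z2 : Type) [LieRing fdot] [LieAlgebra ℂ fdot]
    [AddCommGroup Z1] [Module ℂ Z1] [AddCommGroup Z2] [Module ℂ Z2]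
    (φ : fdot →ₗ[ℂ] fdot →ₗ[ℂ] Z1)
    (hφsymm : ∀ x y : fdot, φ x y = φ y x)
    (hφinv : ∀ x y z : fdot, φ ⁅x, y⁆ z = φ x ⁅y, z⁆)
    (ψ : fdot →ₗ[ℂ] Z2)
    (hψ : ∀ x y : fdot, ψ ⁅x, y⁆ = 0) :
    ∃ A : VAAlg fdot Z1 Z2, A.IsVA φ ψ ∧
      -- f is a central extension of ˜f:
      ∃ (Tf : TfAlg fdot), Tf.IsTf ∧
        ∃ π : A.F →ₗ⁅ℂ⁆ Tf.F,
          Function.Surjective π ∧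
          (∀ n : ℤ, π (A.L n) = Tf.L n) ∧
          (∀ (n : ℤ) (f : fdot), π (A.af n f) = Tf.af n f) ∧
          (∀ z : Z1, π (A.z1 z) = 0) ∧
          (∀ z : Z2, π (A.z2 z) = 0) ∧
          π A.CVir = 0 ∧
          (∀ x : A.F, π x = 0 → ∀ y : A.F, ⁅x, y⁆ = 0) := by
  have : IsAddTorsionFree Z1 := .of_isTorsionFree ℂ Z1
  have hω := isTwoCocycle_virasoroAffineForm hφsymm hφinv hψ 12⁻¹
  refine ⟨centralExtensionAlg hω, isVA_centralExtensionAlg hω, wittLoopAlg fdot, isTf_wittLoopAlg,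
    hω.centralExtensionProj, hω.centralExtensionProj_surjective, fun n ↦ ?_, fun n f ↦ ?_,
    fun _ ↦ rfl, fun _ ↦ rfl, rfl, fun _ ↦ hω.lie_eq_zero_of_centralExtensionProj_eq_zero⟩
  · exact (congrArg _ (centralExtensionAlg_L hω n)).trans (wittLoopAlg_L n).symm
  · exact (congrArg _ (centralExtensionAlg_af hω n f)).trans (wittLoopAlg_af n f).symm

end

end ToroidalPaper8
end
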